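/- arXiv:1306.3340 — 8 statements merged into one kernel-verified Lean document; each statement's English description precedes it below -/
import Mathlib

section
/- Let G be an ℓ-group, let I₁, …, Iₙ be finitely many ℓ-ideals of G, and let g₁, …, gₙ ∈ G be such that gᵢ - gⱼ ∈ Iᵢ ∨ Iⱼ for all i, j ∈ {1, …, n}. Then there exists g ∈ G such that g - gᵢ ∈ Iᵢ for each i ∈ {1, …, n}. (Keimel's Chinese Remainder Theorem for ℓ-groups.) -/
/-- An ℓ-ideal of an ℓ-group `G`: an additive subgroup `I` such that `g ∈ I`
whenever `|g| ≤ |h|` for some `h ∈ I`. -/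
def IsLIdeal {G : Type*} [Lattice G] [AddCommGroup G]
    [CovariantClass G G (· + ·) (· ≤ ·)] (I : AddSubgroup G) : Prop :=
  ∀ ⦃g h : G⦄, h ∈ I → |g| ≤ |h| → g ∈ I

/-- The ℓ-ideal generated by a subset `S` of `G`: the smallest ℓ-ideal containing `S`. -/
def lIdealGen {G : Type*} [Lattice G] [AddCommGroup G]
    [CovariantClass G G (· + ·) (· ≤ ·)] (S : Set G) : AddSubgroup G :=
  sInf {I : AddSubgroup G | IsLIdeal I ∧ S ⊆ ↑I}

/-- A prime ℓ-ideal: a proper ℓ-ideal `p` such that `a ⊓ b = 0` implies `a ∈ p` or `b ∈ p`. -/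
def IsPrimeLIdeal {G : Type*} [Lattice G] [AddCommGroup G]
    [CovariantClass G G (· + ·) (· ≤ ·)] (p : AddSubgroup G) : Prop :=
  IsLIdeal p ∧ p ≠ ⊤ ∧ ∀ a b : G, a ⊓ b = 0 → a ∈ p ∨ b ∈ p

/-- A maximal ℓ-ideal: a proper ℓ-ideal maximal under inclusion among proper ℓ-ideals. -/
def IsMaximalLIdeal {G : Type*} [Lattice G] [AddCommGroup G]
    [CovariantClass G G (· + ·) (· ≤ ·)] (m : AddSubgroup G) : Prop :=
  IsLIdeal m ∧ m ≠ ⊤ ∧ ∀ I : AddSubgroup G, IsLIdeal I → I ≠ ⊤ → m ≤ I → I = m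

/-- A (strong order) unit of `G`. -/
def IsStrongUnit {G : Type*} [Lattice G] [AddCommGroup G]
    [CovariantClass G G (· + ·) (· ≤ ·)] (u : G) : Prop :=
  0 ≤ u ∧ ∀ g : G, ∃ n : ℕ, g ≤ n • u

/-- `G` is strongly semisimple: for every `h ∈ G`, the intersection of all maximal
ℓ-ideals containing `h` equals the principal ℓ-ideal generated by `h`. -/
def IsStronglySemisimple (G : Type*) [Lattice G] [AddCommGroup G]
    [CovariantClass G G (· + ·) (· ≤ ·)] : Prop :=
  ∀ h : G, sInf {m : AddSubgroup G | IsMaximalLIdeal m ∧ h ∈ m} = lIdealGen {h}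

section helpers
variable {G : Type*} [Lattice G] [AddCommGroup G] [CovariantClass G G (· + ·) (· ≤ ·)]

theorem aux_abs_le {x b : G} (h1 : x ≤ b) (h2 : -b ≤ x) : |x| ≤ b :=
  sup_le h1 (neg_le.mp h2)

theorem aux_decomp {x a b : G} (ha : 0 ≤ a) (hb : 0 ≤ b) (h : |x| ≤ a + b) :
    ∃ y z, x = y + z ∧ |y| ≤ a ∧ |z| ≤ b := by
  have h1 : x ≤ a + b := le_trans le_sup_left h
  have h2 : -x ≤ a + b := le_trans le_sup_right h
  have hna : -a ≤ a := le_trans (neg_nonpos.mpr ha) ha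
  refine ⟨(x ⊓ a) ⊔ (-a), x - ((x ⊓ a) ⊔ (-a)), by abel, aux_abs_le ?_ le_sup_right,
    aux_abs_le ?_ ?_⟩
  · exact sup_le inf_le_right hna
  · rw [sub_le_comm]
    refine le_trans (le_inf ?_ ?_) le_sup_left
    · exact sub_le_self _ hb
    · exact sub_le_iff_le_add.mpr h1
  · rw [le_sub_comm]
    refine sup_le (le_trans inf_le_left ?_) ?_
    · rw [sub_neg_eq_add]; exact le_add_of_nonneg_right hb
    · rw [sub_neg_eq_add, neg_le_iff_add_nonneg]
      rw [neg_le_iff_add_nonneg] at h2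
      have e : x + b + a = a + b + x := by abel
      rw [e]; exact h2

theorem aux_mem {I : AddSubgroup G} (hI : IsLIdeal I) {x a : G} (ha : a ∈ I) (h : |x| ≤ a) :
    x ∈ I := hI ha (le_trans h (le_abs_self a))

theorem aux_abs_mem {I : AddSubgroup G} (hI : IsLIdeal I) {a : G} (ha : a ∈ I) : |a| ∈ I :=
  hI ha (le_of_eq (abs_abs a))

theorem aux_bound {I J : AddSubgroup G} (hI : IsLIdeal I) (hJ : IsLIdeal J) {x : G}
    (hx : x ∈ I ⊔ J) : ∃ a ∈ I, ∃ b ∈ J, 0 ≤ a ∧ 0 ≤ b ∧ |x| ≤ a + b := by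
  obtain ⟨u, hu, v, hv, rfl⟩ := AddSubgroup.mem_sup.mp hx
  refine ⟨|u|, aux_abs_mem hI hu, |v|, aux_abs_mem hJ hv, abs_nonneg _, abs_nonneg _, ?_⟩
  refine sup_le (add_le_add (le_abs_self _) (le_abs_self _)) ?_
  rw [neg_add]
  exact add_le_add (neg_le_abs _) (neg_le_abs _)

theorem aux_sup {I J : AddSubgroup G} (hI : IsLIdeal I) (hJ : IsLIdeal J) :
    IsLIdeal (I ⊔ J) := by
  intro x h hh hx
  obtain ⟨a, ha, b, hb, ha0, hb0, hab⟩ := aux_bound hI hJ hh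
  obtain ⟨y, z, rfl, hy, hz⟩ := aux_decomp ha0 hb0 (hx.trans hab)
  exact AddSubgroup.add_mem_sup (aux_mem hI ha hy) (aux_mem hJ hb hz)

theorem aux_gen {I J : AddSubgroup G} (hI : IsLIdeal I) (hJ : IsLIdeal J) :
    lIdealGen ((I : Set G) ∪ (J : Set G)) ≤ I ⊔ J :=
  sInf_le ⟨aux_sup hI hJ, Set.union_subset (le_sup_left (a := I) (b := J))
    (le_sup_right (a := I) (b := J))⟩

theorem aux_dist {I : AddSubgroup G} (hI : IsLIdeal I) {x : G} : ∀ {n : ℕ}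
    (J : Fin n → AddSubgroup G) (_ : ∀ i, IsLIdeal (J i)) (_ : ∀ i, x ∈ I ⊔ J i),
    ∃ a ∈ I, ∃ b, (∀ i, b ∈ J i) ∧ 0 ≤ a ∧ 0 ≤ b ∧ |x| ≤ a + b := by
  intro n
  induction n with
  | zero =>
    intro J _ _
    exact ⟨0, I.zero_mem, |x|, fun i => i.elim0, le_rfl, abs_nonneg x, by simp⟩
  | succ n ih =>
    intro J hJ hx
    obtain ⟨a, ha, b, hb, ha0, hb0, hab⟩ := ih (fun i => J i.succ) (fun i => hJ _) (fun i => hx _)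
    obtain ⟨c, hc, d, hd, hc0, hd0, hcd⟩ := aux_bound hI (hJ 0) (hx 0)
    have h0 : 0 ≤ b ⊓ d := le_inf hb0 hd0
    have habs : |b ⊓ d| = b ⊓ d := abs_of_nonneg h0
    refine ⟨a + c, I.add_mem ha hc, b ⊓ d, ?_, add_nonneg ha0 hc0, h0, ?_⟩
    · intro i
      refine Fin.cases ?_ (fun i => ?_) i
      · exact aux_mem (hJ 0) hd (habs.le.trans inf_le_right)
      · exact aux_mem (hJ _) (hb i) (habs.le.trans inf_le_left)
    · rw [← sub_le_iff_le_add']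
      refine le_inf ?_ ?_
      · rw [sub_le_iff_le_add']
        exact hab.trans (add_le_add (le_add_of_nonneg_right hc0) le_rfl)
      · rw [sub_le_iff_le_add']
        exact hcd.trans (add_le_add (le_add_of_nonneg_left ha0) le_rfl)

end helpers

/-- **Keimel's Chinese Remainder Theorem for ℓ-groups.** -/
theorem keimel_chinese_remainder {G : Type*} [Lattice G] [AddCommGroup G]
    [CovariantClass G G (· + ·) (· ≤ ·)] {n : ℕ}
    (I : Fin n → AddSubgroup G) (hI : ∀ i, IsLIdeal (I i)) (g : Fin n → G)
    (hcomp : ∀ i j, g i - g j ∈ lIdealGen ((I i : Set G) ∪ (I j : Set G))) :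
    ∃ g' : G, ∀ i, g' - g i ∈ I i := by
  induction n with
  | zero => exact ⟨0, fun i => i.elim0⟩
  | succ n ih =>
    obtain ⟨g', hg'⟩ := ih (fun i => I i.succ) (fun i => hI _) (fun i => g i.succ)
      (fun i j => hcomp _ _)
    have hx : ∀ i : Fin n, g' - g 0 ∈ I 0 ⊔ I i.succ := by
      intro i
      have h1 := aux_gen (hI i.succ) (hI 0) (hcomp i.succ 0)
      rw [sup_comm] at h1
      have h2 : g' - g i.succ ∈ I 0 ⊔ I i.succ := AddSubgroup.mem_sup_right (hg' i)
      have := add_mem h2 h1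
      rwa [sub_add_sub_cancel] at this
    obtain ⟨a, ha, b, hb, ha0, hb0, hab⟩ := aux_dist (hI 0) (fun i => I i.succ) (fun i => hI _) hx
    obtain ⟨y, z, he, hy, hz⟩ := aux_decomp ha0 hb0 hab
    refine ⟨g' - z, fun i => ?_⟩
    refine Fin.cases ?_ (fun i => ?_) i
    · have : g' - z - g 0 = y := by rw [sub_right_comm, he]; abel
      rw [this]
      exact aux_mem (hI 0) ha hy
    · rw [sub_right_comm]
      exact sub_mem (hg' i) (aux_mem (hI _) (hb i) hz)
end

section
/- Let (G, u) be a strongly semisimple unital ℓ-group, let h₁, …, hₙ ∈ G, and for each i let Zᵢ be the set of maximal ℓ-ideals of G containing hᵢ. Suppose g₁, …, gₙ ∈ G satisfy gᵢ - gⱼ ∈ m for all i, j and all m ∈ Zᵢ ∩ Zⱼ, and suppose moreover that every maximal ℓ-ideal of G belongs to Z₁ ∪ … ∪ Zₙ. Then there exists a unique g ∈ G such that g - gᵢ ∈ m for each i ∈ {1, …, n} and each m ∈ Zᵢ. (Main Theorem, uniqueness part.) -/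
section helpers

variable {G : Type*} [Lattice G] [AddCommGroup G] [CovariantClass G G (· + ·) (· ≤ ·)]

def princ (h : G) : AddSubgroup G where
  carrier := {x | ∃ n : ℕ, |x| ≤ n • |h|}
  zero_mem' := ⟨0, by simp⟩
  add_mem' := by
    rintro a b ⟨n, hn⟩ ⟨k, hk⟩
    refine ⟨n + k, ?_⟩
    rw [add_nsmul]
    exact (abs_add_le a b).trans (add_le_add hn hk)
  neg_mem' := by
    rintro a ⟨n, hn⟩
    exact ⟨n, by rwa [abs_neg]⟩

theorem exists_of_mem_gen {h x : G} (hx : x ∈ lIdealGen {h}) : ∃ n : ℕ, |x| ≤ n • |h| := by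
  have h1 : lIdealGen {h} ≤ princ h := by
    refine sInf_le ⟨?_, ?_⟩
    · rintro a b ⟨n, hn⟩ hab
      exact ⟨n, hab.trans hn⟩
    · rintro y rfl
      exact ⟨1, by simp⟩
  exact h1 hx

theorem abs_mem_of {m : AddSubgroup G} (hm : IsLIdeal m) {h : G} (hh : h ∈ m) : |h| ∈ m :=
  hm hh (by rw [abs_abs])

theorem mem_of_abs_le {m : AddSubgroup G} (hm : IsLIdeal m) {h x : G} (hh : h ∈ m) {n : ℕ}
    (hx : |x| ≤ n • |h|) : x ∈ m :=
  hm (m.nsmul_mem (abs_mem_of hm hh) n) (hx.trans (le_abs_self _))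

theorem clamp_fst {x p : G} (hp : 0 ≤ p) : |(x ⊓ p) ⊔ (-p)| ≤ p := by
  have h0 : -p ≤ p := (neg_nonpos.2 hp).trans hp
  refine abs_le'.2 ⟨sup_le inf_le_right h0, ?_⟩
  exact neg_le.1 le_sup_right

theorem clamp_snd {x p q : G} (hq : 0 ≤ q) (hx : |x| ≤ p + q) :
    |x - ((x ⊓ p) ⊔ (-p))| ≤ q := by
  obtain ⟨h1, h2⟩ := abs_le'.1 hx
  refine abs_le'.2 ⟨?_, ?_⟩
  · rw [sub_le_iff_le_add']
    have h3 : x ≤ (x ⊓ p) + q := by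
      rw [inf_add]
      exact le_inf (le_add_of_nonneg_right hq) h1
    exact h3.trans (by gcongr; exact le_sup_left)
  · rw [neg_sub, sub_le_iff_le_add']
    refine sup_le (inf_le_left.trans (le_add_of_nonneg_right hq)) ?_
    have h4 := neg_le_neg_iff.2 h2
    rw [neg_neg, neg_add] at h4
    have h5 := add_le_add_left h4 q
    simpa using h5

theorem crt {n : ℕ} (h g : Fin n → G)
    (hc : ∀ i j, ∃ N : ℕ, |g i - g j| ≤ N • (|h i| + |h j|)) (s : Finset (Fin n)) :
    ∃ f : G, ∀ i ∈ s, ∃ N : ℕ, |f - g i| ≤ N • |h i| := by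
  classical
  induction s using Finset.induction_on with
  | empty => exact ⟨0, by simp⟩
  | insert k s hk ih =>
    obtain ⟨f, hf⟩ := ih
    have key : ∀ i ∈ s, ∃ N : ℕ, ∀ M ≥ N, |f - g k| ≤ M • |h k| + M • |h i| := by
      intro i hi
      obtain ⟨a, ha⟩ := hf i hi
      obtain ⟨b, hb⟩ := hc i k
      refine ⟨a + b, fun M hM => ?_⟩
      have e : f - g k = (f - g i) + (g i - g k) := by abel
      have h1 : |f - g k| ≤ a • |h i| + b • (|h i| + |h k|) := by
        rw [e]
        exact (abs_add_le _ _).trans (add_le_add ha hb)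
      have h2 : a • |h i| + b • (|h i| + |h k|) = b • |h k| + (a + b) • |h i| := by
        rw [nsmul_add, add_nsmul]; abel
      rw [h2] at h1
      exact h1.trans (add_le_add (nsmul_le_nsmul_left (abs_nonneg _) (by omega))
        (nsmul_le_nsmul_left (abs_nonneg _) hM))
    choose! N hN using key
    obtain ⟨M, hM⟩ : ∃ M : ℕ, ∀ i ∈ s, N i ≤ M := ⟨s.sup N, fun i hi => Finset.le_sup hi⟩
    set p := M • |h k| with hp
    set x := f - g k with hx
    refine ⟨g k + ((x ⊓ p) ⊔ (-p)), fun i hi => ?_⟩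
    rcases Finset.mem_insert.1 hi with rfl | hi
    · refine ⟨M, ?_⟩
      rw [add_sub_cancel_left]
      exact clamp_fst (nsmul_nonneg (abs_nonneg _) M)
    · obtain ⟨a, ha⟩ := hf i hi
      refine ⟨a + M, ?_⟩
      have h1 := clamp_snd (nsmul_nonneg (abs_nonneg (h i)) M) (hN i hi M (hM i hi))
      have e : g k + ((x ⊓ p) ⊔ (-p)) - g i = (f - g i) + -(x - ((x ⊓ p) ⊔ (-p))) := by
        rw [hx]; abel
      rw [e, add_nsmul]
      refine (abs_add_le _ _).trans (add_le_add ha ?_)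
      rw [abs_neg]
      exact h1

end helpers

/-- **Main Theorem (with uniqueness).** If moreover the zero sets `Z i` cover
all maximal ℓ-ideals, the patched element is unique. -/
theorem main_theorem_unique {G : Type*} [Lattice G] [AddCommGroup G]
    [CovariantClass G G (· + ·) (· ≤ ·)] (u : G) (hu : IsStrongUnit u)
    (hss : IsStronglySemisimple G) {n : ℕ} (h g : Fin n → G)
    (hcomp : ∀ i j, ∀ m : AddSubgroup G, IsMaximalLIdeal m →
      h i ∈ m → h j ∈ m → g i - g j ∈ m)
    (hcover : ∀ m : AddSubgroup G, IsMaximalLIdeal m → ∃ i, h i ∈ m) :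
    ∃! g' : G, ∀ i, ∀ m : AddSubgroup G, IsMaximalLIdeal m → h i ∈ m → g' - g i ∈ m := by
  have hc : ∀ i j, ∃ N : ℕ, |g i - g j| ≤ N • (|h i| + |h j|) := by
    intro i j
    have hnn : 0 ≤ |h i| + |h j| := add_nonneg (abs_nonneg _) (abs_nonneg _)
    have h1 : g i - g j ∈ lIdealGen {|h i| + |h j|} := by
      rw [← hss, AddSubgroup.mem_sInf]
      rintro m ⟨hm, hmem⟩
      refine hcomp i j m hm (hm.1 hmem ?_) (hm.1 hmem ?_)
      · rw [abs_of_nonneg hnn]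
        exact le_add_of_nonneg_right (abs_nonneg _)
      · rw [abs_of_nonneg hnn]
        exact le_add_of_nonneg_left (abs_nonneg _)
    obtain ⟨N, hN⟩ := exists_of_mem_gen h1
    rw [abs_of_nonneg hnn] at hN
    exact ⟨N, hN⟩
  obtain ⟨f, hf⟩ := crt h g hc Finset.univ
  refine ⟨f, ?_, ?_⟩
  · intro i m hm him
    obtain ⟨N, hN⟩ := hf i (Finset.mem_univ i)
    exact mem_of_abs_le hm.1 him hN
  · intro y hy
    have h1 : y - f ∈ lIdealGen {(0 : G)} := by
      rw [← hss, AddSubgroup.mem_sInf]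
      rintro m ⟨hm, -⟩
      obtain ⟨i, hi⟩ := hcover m hm
      obtain ⟨N, hN⟩ := hf i (Finset.mem_univ i)
      have h2 := m.sub_mem (hy i m hm hi) (mem_of_abs_le hm.1 hi hN)
      simpa using h2
    obtain ⟨N, hN⟩ := exists_of_mem_gen h1
    rw [abs_zero, nsmul_zero] at hN
    obtain ⟨h3, h4⟩ := abs_le'.1 hN
    exact sub_eq_zero.1 (le_antisymm h3 (neg_nonpos.1 h4))
end

section
/- Let (G, u) be a strongly semisimple unital ℓ-group, let h₁, …, hₙ ∈ G, and let g₁, …, gₙ ∈ G be such that for all i, j ∈ {1, …, n} and every maximal ℓ-ideal m of G with hᵢ ∈ m and hⱼ ∈ m one has gᵢ - gⱼ ∈ m. Then there exists g ∈ G such that for each i ∈ {1, …, n} and each prime ℓ-ideal p of G with hᵢ ∈ p one has g - gᵢ ∈ p. (Strongly Semisimple Patching Lemma: closed co-compact subsets of Spec G are the sets of primes containing a given element hᵢ.) -/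
theorem aux_gen_s4 {G : Type*} [Lattice G] [AddCommGroup G]
    [CovariantClass G G (· + ·) (· ≤ ·)] (k x : G) (hk : 0 ≤ k)
    (hx : x ∈ lIdealGen {k}) : ∃ N : ℕ, |x| ≤ N • k := by
  have : AddLeftMono G := ⟨fun a b c h => CovariantClass.elim a h⟩
  have : IsOrderedAddMonoid G := { add_le_add_left := fun a b h c => by gcongr }
  let I : AddSubgroup G :=
    { carrier := {x | ∃ N : ℕ, |x| ≤ N • k}
      zero_mem' := ⟨0, by simp⟩
      add_mem' := by
        rintro a b ⟨N, hN⟩ ⟨M, hM⟩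
        exact ⟨N + M, (abs_add_le a b).trans (by rw [add_nsmul]; exact add_le_add hN hM)⟩
      neg_mem' := by
        rintro a ⟨N, hN⟩
        exact ⟨N, by simpa using hN⟩ }
  have hI : IsLIdeal I := by
    rintro a b ⟨N, hN⟩ hab
    exact ⟨N, hab.trans hN⟩
  have hkI : ({k} : Set G) ⊆ I := by
    rintro y rfl
    exact ⟨1, by simp [abs_of_nonneg hk]⟩
  exact (AddSubgroup.mem_sInf.1 hx) I ⟨hI, hkI⟩

/-- **Strongly Semisimple Patching Lemma**: compatibility on maximal ℓ-ideals
suffices to patch on all primes containing the `h i`. -/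
theorem strongly_semisimple_patching {G : Type*} [Lattice G] [AddCommGroup G]
    [CovariantClass G G (· + ·) (· ≤ ·)] (u : G) (hu : IsStrongUnit u)
    (hss : IsStronglySemisimple G) {n : ℕ} (h g : Fin n → G)
    (hcomp : ∀ i j, ∀ m : AddSubgroup G, IsMaximalLIdeal m →
      h i ∈ m → h j ∈ m → g i - g j ∈ m) :
    ∃ g' : G, ∀ i, ∀ p : AddSubgroup G, IsPrimeLIdeal p → h i ∈ p → g' - g i ∈ p := by
  have : AddLeftMono G := ⟨fun a b c h => CovariantClass.elim a h⟩
  have : IsOrderedAddMonoid G := { add_le_add_left := fun a b h c => by gcongr }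
  have key : ∀ i j, ∃ N : ℕ, |g i - g j| ≤ N • (|h i| + |h j|) := by
    intro i j
    have h0 : 0 ≤ |h i| + |h j| := add_nonneg (abs_nonneg _) (abs_nonneg _)
    apply aux_gen_s4 _ _ h0
    rw [← hss, AddSubgroup.mem_sInf]
    rintro m ⟨hm, hmem⟩
    refine hcomp i j m hm (hm.1 hmem ?_) (hm.1 hmem ?_)
    · rw [abs_of_nonneg h0]; exact le_add_of_nonneg_right (abs_nonneg _)
    · rw [abs_of_nonneg h0]; exact le_add_of_nonneg_left (abs_nonneg _)
  choose N hN using key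
  obtain ⟨M, hM⟩ : ∃ M : ℕ, ∀ i j, N i j ≤ M :=
    ⟨∑ i, ∑ j, N i j, fun i j =>
      (Finset.single_le_sum (f := fun j => N i j) (fun _ _ => Nat.zero_le _)
        (Finset.mem_univ j)).trans
      (Finset.single_le_sum (f := fun i => ∑ j, N i j) (fun _ _ => Nat.zero_le _)
        (Finset.mem_univ i))⟩
  have hb : ∀ i j, g j - M • |h j| ≤ g i + M • |h i| := by
    intro i j
    have h0 : 0 ≤ |h j| + |h i| := add_nonneg (abs_nonneg _) (abs_nonneg _)
    have h1 : g j - g i ≤ M • |h j| + M • |h i| := by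
      rw [← nsmul_add]
      exact (le_abs_self _).trans ((hN j i).trans (nsmul_le_nsmul_left h0 (hM j i)))
    rw [sub_le_iff_le_add] at h1 ⊢
    exact h1.trans (le_of_eq (by abel))
  rcases Nat.eq_zero_or_pos n with rfl | hn
  · exact ⟨0, fun i => i.elim0⟩
  have hne : (Finset.univ : Finset (Fin n)).Nonempty := ⟨⟨0, hn⟩, Finset.mem_univ _⟩
  refine ⟨Finset.univ.sup' hne (fun i => g i - M • |h i|), fun i p hp hi => ?_⟩
  have hmem : M • |h i| ∈ p :=
    p.nsmul_mem (hp.1 hi (by rw [abs_abs])) M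
  refine hp.1 hmem ?_
  rw [abs_of_nonneg (nsmul_nonneg (abs_nonneg (h i)) M)]
  refine abs_le'.2 ⟨?_, ?_⟩
  · rw [sub_le_iff_le_add']
    exact Finset.sup'_le _ _ fun j _ => hb i j
  · rw [neg_sub, sub_le_comm]
    exact Finset.le_sup' (fun i => g i - M • |h i|) (Finset.mem_univ i)
end

section
/- Let (G, u) be a strongly semisimple unital ℓ-group, let I₁, …, Iₙ be finitely many principal ℓ-ideals of G, and let g₁, …, gₙ ∈ G be such that gᵢ - gⱼ ∈ m for all i, j ∈ {1, …, n} and every maximal ℓ-ideal m of G containing Iᵢ ∨ Iⱼ. Then there exists g ∈ G such that g - gᵢ ∈ Iᵢ for each i ∈ {1, …, n}. (Strongly Semisimple Chinese Remainder Theorem.) -/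
theorem isOrdered_of_cov {G : Type*} [Lattice G] [AddCommGroup G]
    [CovariantClass G G (· + ·) (· ≤ ·)] : IsOrderedAddMonoid G where
  add_le_add_left := fun a b h c => by
    rw [add_comm a c, add_comm b c]
    exact CovariantClass.elim (μ := (· + ·)) (r := (· ≤ ·)) c h

theorem mem_lIdealGen_of_le {G : Type*} [Lattice G] [AddCommGroup G]
    [CovariantClass G G (· + ·) (· ≤ ·)] {a x : G} {k : ℕ} (h : |x| ≤ k • |a|) :
    x ∈ lIdealGen {a} := by
  have : IsOrderedAddMonoid G := isOrdered_of_cov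
  refine AddSubgroup.mem_sInf.2 ?_
  rintro J ⟨hJ, ha⟩
  have ha' : a ∈ J := ha rfl
  have h1 : |a| ∈ J := hJ ha' (by rw [abs_abs])
  refine hJ (J.nsmul_mem h1 k) (h.trans (le_abs_self _))

theorem exists_le_of_mem_lIdealGen {G : Type*} [Lattice G] [AddCommGroup G]
    [CovariantClass G G (· + ·) (· ≤ ·)] {a x : G} (h : x ∈ lIdealGen {a}) :
    ∃ k : ℕ, |x| ≤ k • |a| := by
  have : IsOrderedAddMonoid G := isOrdered_of_cov
  let J : AddSubgroup G :=
    { carrier := {x | ∃ k : ℕ, |x| ≤ k • |a|}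
      zero_mem' := ⟨0, by simp⟩
      add_mem' := by
        rintro x y ⟨k, hk⟩ ⟨l, hl⟩
        exact ⟨k + l, by rw [add_nsmul]; exact (abs_add_le x y).trans (add_le_add hk hl)⟩
      neg_mem' := by
        rintro x ⟨k, hk⟩
        exact ⟨k, by rwa [abs_neg]⟩ }
  have hJ : IsLIdeal J := by
    rintro x y ⟨k, hk⟩ hxy
    exact ⟨k, hxy.trans hk⟩
  refine AddSubgroup.mem_sInf.1 h J ⟨hJ, ?_⟩
  rintro _ rfl
  exact ⟨1, by simp⟩

/-- **Strongly Semisimple Chinese Remainder Theorem.** -/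
theorem strongly_semisimple_crt {G : Type*} [Lattice G] [AddCommGroup G]
    [CovariantClass G G (· + ·) (· ≤ ·)] (u : G) (hu : IsStrongUnit u)
    (hss : IsStronglySemisimple G) {n : ℕ}
    (I : Fin n → AddSubgroup G) (hI : ∀ i, ∃ a : G, I i = lIdealGen {a})
    (g : Fin n → G)
    (hcomp : ∀ i j, ∀ m : AddSubgroup G, IsMaximalLIdeal m →
      lIdealGen ((I i : Set G) ∪ (I j : Set G)) ≤ m → g i - g j ∈ m) :
    ∃ g' : G, ∀ i, g' - g i ∈ I i := by
  have : IsOrderedAddMonoid G := isOrdered_of_cov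
  choose a ha using hI
  have key : ∀ i j, ∃ k : ℕ, |g i - g j| ≤ k • (|a i| + |a j|) := by
    intro i j
    have hnn : 0 ≤ |a i| + |a j| := add_nonneg (abs_nonneg _) (abs_nonneg _)
    have : g i - g j ∈ lIdealGen {|a i| + |a j|} := by
      rw [← hss]
      refine AddSubgroup.mem_sInf.2 ?_
      rintro m ⟨hm, hmem⟩
      have hsub : ∀ b, |b| ≤ |a i| + |a j| → lIdealGen {b} ≤ m := by
        intro b hb
        refine sInf_le ⟨hm.1, ?_⟩
        rintro _ rfl
        exact hm.1 hmem (hb.trans (le_abs_self _))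
      refine hcomp i j m hm (sInf_le ⟨hm.1, ?_⟩)
      rw [ha i, ha j]
      exact Set.union_subset (hsub _ (le_add_of_nonneg_right (abs_nonneg _)))
        (hsub _ (le_add_of_nonneg_left (abs_nonneg _)))
    obtain ⟨k, hk⟩ := exists_le_of_mem_lIdealGen this
    exact ⟨k, by rwa [abs_of_nonneg hnn] at hk⟩
  choose k hk using key
  obtain ⟨K, hK⟩ : ∃ K : ℕ, ∀ i j, k i j ≤ K :=
    ⟨∑ i, ∑ j, k i j, fun i j =>
      (Finset.single_le_sum (f := fun j => k i j) (fun _ _ => Nat.zero_le _)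
        (Finset.mem_univ j)).trans
      (Finset.single_le_sum (f := fun i => ∑ j, k i j) (fun _ _ => Nat.zero_le _)
        (Finset.mem_univ i))⟩
  rcases Nat.eq_zero_or_pos n with hn | hn
  · subst hn
    exact ⟨0, fun i => i.elim0⟩
  have hne : (Finset.univ : Finset (Fin n)).Nonempty := ⟨⟨0, hn⟩, Finset.mem_univ _⟩
  refine ⟨Finset.univ.sup' hne (fun i => g i - K • |a i|), fun i => ?_⟩
  rw [ha i]
  refine mem_lIdealGen_of_le (k := K) (abs_le'.2 ⟨?_, ?_⟩)
  · rw [sub_le_iff_le_add]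
    refine Finset.sup'_le _ _ fun j _ => ?_
    have h1 : g j - g i ≤ K • |a j| + K • |a i| := by
      rw [← nsmul_add]
      exact (le_abs_self _).trans ((hk j i).trans
        (nsmul_le_nsmul_left (add_nonneg (abs_nonneg _) (abs_nonneg _)) (hK j i)))
    rw [sub_le_iff_le_add] at h1 ⊢
    exact h1.trans (le_of_eq (by abel))
  · have h2 := Finset.le_sup' (fun i => g i - K • |a i|) (Finset.mem_univ i)
    rw [neg_sub, sub_le_comm]
    exact h2
end

section
/- For a unital ℓ-group (G, u), the following are equivalent: (1) Rad(G) = {0}, i.e. (G, u) is semisimple; (2) G is Archimedean, i.e. for all g, h ∈ G with 0 < g ≤ h there exists m ∈ ℕ with ¬(m • g ≤ h). -/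
section helpers

variable {G : Type*} [Lattice G] [AddCommGroup G] [CovariantClass G G (· + ·) (· ≤ ·)]

/-- The ideal generated by an ideal and a nonnegative element. -/
def adjI (M : AddSubgroup G) (g : G) (hg : 0 ≤ g) : AddSubgroup G where
  carrier := {x | ∃ k ∈ M, 0 ≤ k ∧ ∃ n : ℕ, |x| ≤ k + n • g}
  zero_mem' := ⟨0, M.zero_mem, le_rfl, 0, by simp⟩
  add_mem' := by
    rintro x y ⟨k, hk, hk0, n, hx⟩ ⟨l, hl, hl0, p, hy⟩
    refine ⟨k + l, M.add_mem hk hl, add_nonneg hk0 hl0, n + p, ?_⟩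
    calc |x + y| ≤ |x| + |y| := abs_add_le x y
      _ ≤ (k + n • g) + (l + p • g) := add_le_add hx hy
      _ = k + l + (n + p) • g := by rw [add_nsmul]; abel
  neg_mem' := by
    rintro x ⟨k, hk, hk0, n, hx⟩
    exact ⟨k, hk, hk0, n, by rwa [abs_neg]⟩

theorem adjI_ideal (M : AddSubgroup G) (g : G) (hg : 0 ≤ g) : IsLIdeal (adjI M g hg) := by
  rintro x y ⟨k, hk, hk0, n, hy⟩ hxy
  exact ⟨k, hk, hk0, n, hxy.trans hy⟩

theorem abs_mem_of_s6 {M : AddSubgroup G} (hM : IsLIdeal M) {x : G} (hx : x ∈ M) : |x| ∈ M :=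
  hM hx (by rw [abs_abs])

theorem mem_of_le {M : AddSubgroup G} (hM : IsLIdeal M) {x y : G} (hy : y ∈ M) (h0 : 0 ≤ x)
    (h : x ≤ y) : x ∈ M :=
  hM hy (by rw [abs_of_nonneg h0, abs_of_nonneg (h0.trans h)]; exact h)

theorem le_adjI {M : AddSubgroup G} (hM : IsLIdeal M) (g : G) (hg : 0 ≤ g) : M ≤ adjI M g hg :=
  fun x hx => ⟨|x|, abs_mem_of_s6 hM hx, abs_nonneg x, 0, by simp⟩

theorem self_mem_adjI (M : AddSubgroup G) (g : G) (hg : 0 ≤ g) : g ∈ adjI M g hg :=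
  ⟨0, M.zero_mem, le_rfl, 1, by simp [abs_of_nonneg hg]⟩

theorem eq_top_of_unit {M : AddSubgroup G} (hM : IsLIdeal M) {u : G} (hu : IsStrongUnit u)
    (h : u ∈ M) : M = ⊤ := by
  rw [eq_top_iff]
  intro x _
  obtain ⟨n, hn⟩ := hu.2 |x|
  have : |x| ∈ M := mem_of_le hM (M.nsmul_mem h n) (abs_nonneg x) hn
  exact hM this (by rw [abs_abs])

theorem exists_max {I : AddSubgroup G} (hI : IsLIdeal I) {u : G} (hu : IsStrongUnit u)
    (h : u ∉ I) : ∃ M, IsMaximalLIdeal M ∧ I ≤ M := by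
  obtain ⟨M, hIM, hM⟩ := zorn_le_nonempty₀ {J : AddSubgroup G | IsLIdeal J ∧ u ∉ J} (by
    intro c hc hch y hy
    have hd : DirectedOn (· ≤ ·) c := hch.directedOn
    refine ⟨sSup c, ⟨?_, ?_⟩, fun z hz => le_sSup hz⟩
    · intro a b hb hab
      rw [AddSubgroup.mem_sSup_of_directedOn ⟨y, hy⟩ hd] at hb ⊢
      obtain ⟨J, hJ, hbJ⟩ := hb
      exact ⟨J, hJ, (hc hJ).1 hbJ hab⟩
    · intro hu'
      rw [AddSubgroup.mem_sSup_of_directedOn ⟨y, hy⟩ hd] at hu'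
      obtain ⟨J, hJ, hbJ⟩ := hu'
      exact (hc hJ).2 hbJ) I ⟨hI, h⟩
  refine ⟨M, ⟨hM.prop.1, ?_, ?_⟩, hIM⟩
  · rintro rfl
    exact hM.prop.2 (AddSubgroup.mem_top u)
  · intro J hJ hJt hMJ
    exact le_antisymm (hM.le_of_ge ⟨hJ, fun h => hJt (eq_top_of_unit hJ hu h)⟩ hMJ) hMJ

theorem inf_nsmul_zero {a b : G} (ha : 0 ≤ a) (hb : 0 ≤ b) (h : a ⊓ b = 0) (n : ℕ) :
    a ⊓ n • b = 0 := by
  induction n with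
  | zero => simpa using ha
  | succ n ih =>
    apply le_antisymm _ (le_inf ha (nsmul_nonneg hb _))
    have h1 : a ⊓ (n + 1) • b - b ≤ a ⊓ n • b := by
      apply le_inf
      · rw [sub_le_iff_le_add]
        exact inf_le_left.trans (le_add_of_nonneg_right hb)
      · rw [sub_le_iff_le_add, ← succ_nsmul]
        exact inf_le_right
    rw [ih, sub_nonpos] at h1
    rw [← h]
    exact le_inf inf_le_left h1

end helpers

/-- For a unital ℓ-group, semisimplicity (trivial radical) is equivalent to the
Archimedean property. -/
theorem semisimple_iff_archimedean {G : Type*} [Lattice G] [AddCommGroup G]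
    [CovariantClass G G (· + ·) (· ≤ ·)] (u : G) (hu : IsStrongUnit u) :
    (∀ g : G, (∀ m : AddSubgroup G, IsMaximalLIdeal m → g ∈ m) → g = 0) ↔
      (∀ g h : G, 0 < g → g ≤ h → ∃ m : ℕ, ¬ (m • g ≤ h)) := by
  constructor
  · intro H g h hg hgh
    by_contra! hc
    refine hg.ne' (H g fun M hM => ?_)
    by_contra hgM
    have htop : adjI M g hg.le = ⊤ := by
      by_contra hne
      have := hM.2.2 _ (adjI_ideal M g hg.le) hne (le_adjI hM.1 g hg.le)
      exact hgM (this ▸ self_mem_adjI M g hg.le)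
    obtain ⟨k, hk, hk0, n, hn⟩ : h ∈ adjI M g hg.le := htop ▸ AddSubgroup.mem_top h
    have h1 : (n + 1) • g ≤ k + n • g := (hc (n + 1)).trans ((le_abs_self h).trans hn)
    rw [succ_nsmul, add_comm, add_le_add_iff_right] at h1
    exact hgM (mem_of_le hM.1 hk hg.le h1)
  · intro H g hg
    by_contra hne
    have hpos : 0 < |g| := lt_of_le_of_ne (abs_nonneg g) (fun h => hne (by
      apply le_antisymm
      · rw [h]; exact le_abs_self g
      · rw [← neg_nonpos, h]; exact neg_le_abs g))
    obtain ⟨n, hn⟩ := hu.2 |g|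
    have hn0 : n ≠ 0 := by
      rintro rfl
      rw [zero_nsmul] at hn
      exact absurd hn hpos.not_ge
    obtain ⟨m, hm⟩ := H |g| (n • u) hpos hn
    set d := m • |g| - n • u with hd
    have hinf : d⁺ ⊓ d⁻ = 0 := posPart_inf_negPart_eq_zero d
    have hb := negPart_nonneg d
    have hproper : u ∉ adjI ⊥ d⁻ hb := by
      rintro h
      have ht := eq_top_of_unit (adjI_ideal ⊥ d⁻ hb) hu h
      obtain ⟨k, hk, hk0, p, hp⟩ : d⁺ ∈ adjI ⊥ d⁻ hb := ht ▸ AddSubgroup.mem_top _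
      rw [AddSubgroup.mem_bot] at hk
      rw [hk, zero_add, abs_of_nonneg (posPart_nonneg d)] at hp
      have h2 := inf_nsmul_zero (posPart_nonneg d) hb hinf p
      rw [inf_eq_left.2 hp] at h2
      have h3 : d ≤ 0 := h2 ▸ le_posPart d
      exact hm (sub_nonpos.1 h3)
    obtain ⟨M, hM, hIM⟩ := exists_max (adjI_ideal ⊥ d⁻ hb) hu hproper
    apply hM.2.1
    apply eq_top_of_unit hM.1 hu
    have hbM : d⁻ ∈ M := hIM (self_mem_adjI _ _ hb)
    have hgM : |g| ∈ M := abs_mem_of_s6 hM.1 (hg M hM)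
    refine mem_of_le hM.1 (M.add_mem (M.nsmul_mem hgM m) hbM) hu.1 ?_
    calc u ≤ n • u := le_self_nsmul hu.1 hn0
      _ = m • |g| + -d := by rw [hd]; abel
      _ ≤ m • |g| + d⁻ := by gcongr; exact neg_le_negPart d
end

section
/- A unital ℓ-group (G, u) is strongly semisimple if and only if for every h ∈ G and every prime ℓ-ideal p of G with h ∈ p, the intersection of all maximal ℓ-ideals of G containing h is contained in p. (Spectral characterisation of strong semisimplicity: every closed co-compact subset K of Spec G satisfies K = cl(K ∩ Max G).) -/
theorem inf_add_le_zero_aux {G : Type*} [Lattice G] [AddCommGroup G]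
    [CovariantClass G G (· + ·) (· ≤ ·)] {a b c : G} (ha : 0 ≤ a) (hc : 0 ≤ c)
    (h1 : a ⊓ b = 0) (h2 : a ⊓ c = 0) : a ⊓ (b + c) = 0 := by
  have hb : 0 ≤ b := h1 ▸ inf_le_right
  apply le_antisymm
  · have e1 : a ⊓ (b + c) - c ≤ a ⊓ b := by
      apply le_inf
      · exact (sub_le_self _ hc).trans inf_le_left
      · exact sub_le_iff_le_add.2 inf_le_right
    rw [h1] at e1
    have e2 := sub_nonpos.1 e1
    rw [← h2]
    exact le_inf inf_le_left e2
  · exact le_inf ha (add_nonneg hb hc)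

theorem inf_nsmul_aux {G : Type*} [Lattice G] [AddCommGroup G]
    [CovariantClass G G (· + ·) (· ≤ ·)] {a b : G} (h : a ⊓ b = 0) (n : ℕ) :
    a ⊓ (n • b) = 0 := by
  have ha : 0 ≤ a := h ▸ inf_le_left
  have hb : 0 ≤ b := h ▸ inf_le_right
  induction n with
  | zero => simpa using ha
  | succ k ih => rw [succ_nsmul]; exact inf_add_le_zero_aux ha hb ih h

/-- The ideal generated by an ideal and a nonnegative element. -/
def adjoinAux {G : Type*} [Lattice G] [AddCommGroup G]
    [CovariantClass G G (· + ·) (· ≤ ·)] (p : AddSubgroup G) (hp : IsLIdeal p) (a : G) :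
    AddSubgroup G where
  carrier := {x | ∃ z ∈ p, ∃ n : ℕ, 0 ≤ z ∧ |x| ≤ z + n • a}
  zero_mem' := ⟨0, p.zero_mem, 0, le_rfl, by simp⟩
  add_mem' := by
    rintro x y ⟨z, hz, n, hz0, hx⟩ ⟨w, hw, m, hw0, hy⟩
    refine ⟨z + w, p.add_mem hz hw, n + m, add_nonneg hz0 hw0, ?_⟩
    calc |x + y| ≤ |x| + |y| := abs_add_le x y
      _ ≤ (z + n • a) + (w + m • a) := add_le_add hx hy
      _ = _ := by rw [add_nsmul]; abel
  neg_mem' := by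
    rintro x ⟨z, hz, n, hz0, hx⟩
    exact ⟨z, hz, n, hz0, by rwa [abs_neg]⟩

theorem abs_mem_aux {G : Type*} [Lattice G] [AddCommGroup G]
    [CovariantClass G G (· + ·) (· ≤ ·)] {p : AddSubgroup G} (hp : IsLIdeal p) {z : G}
    (hz : z ∈ p) : |z| ∈ p := hp hz (by rw [abs_abs])

theorem exists_prime_aux {G : Type*} [Lattice G] [AddCommGroup G]
    [CovariantClass G G (· + ·) (· ≤ ·)] (I : AddSubgroup G) (hI : IsLIdeal I) (g : G)
    (hg : g ∉ I) : ∃ p, IsPrimeLIdeal p ∧ I ≤ p ∧ g ∉ p := by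
  obtain ⟨p, hIp, hmax⟩ := zorn_le_nonempty₀ {J : AddSubgroup G | IsLIdeal J ∧ g ∉ J} (by
    intro c hc hchain y hy
    have hne : c.Nonempty := ⟨y, hy⟩
    have hd : DirectedOn (· ≤ ·) c := hchain.directedOn
    refine ⟨sSup c, ⟨?_, ?_⟩, fun z hz => le_sSup hz⟩
    · intro a b hb hab
      rw [AddSubgroup.mem_sSup_of_directedOn hne hd] at hb ⊢
      obtain ⟨J, hJ, hbJ⟩ := hb
      exact ⟨J, hJ, (hc hJ).1 hbJ hab⟩
    · rw [AddSubgroup.mem_sSup_of_directedOn hne hd]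
      rintro ⟨J, hJ, hbJ⟩
      exact (hc hJ).2 hbJ) I ⟨hI, hg⟩
  obtain ⟨hp, hgp⟩ := hmax.prop
  have key : ∀ a : G, 0 ≤ a → a ∉ p → ∃ z ∈ p, ∃ n : ℕ, 0 ≤ z ∧ |g| ≤ z + n • a := by
    intro a ha hap
    by_contra hcon
    have hle : p ≤ adjoinAux p hp a := fun x hx =>
      ⟨|x|, abs_mem_aux hp hx, 0, abs_nonneg x, by simp⟩
    have hid : IsLIdeal (adjoinAux p hp a) := by
      rintro x y ⟨z, hz, n, hz0, hy⟩ hxy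
      exact ⟨z, hz, n, hz0, hxy.trans hy⟩
    have := hmax.le_of_ge (y := adjoinAux p hp a) ⟨hid, hcon⟩ hle
    exact hap (this ⟨0, p.zero_mem, 1, le_rfl, by simp [abs_of_nonneg ha]⟩)
  refine ⟨p, ⟨hp, fun h => hgp (h ▸ AddSubgroup.mem_top g), ?_⟩, hIp, hgp⟩
  intro a b hab
  by_contra! hcon
  have ha : 0 ≤ a := hab ▸ inf_le_left
  have hb : 0 ≤ b := hab ▸ inf_le_right
  obtain ⟨z, hz, n, hz0, h1⟩ := key a ha hcon.1
  obtain ⟨w, hw, m, hw0, h2⟩ := key b hb hcon.2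
  have h0 : (m • b) ⊓ (n • a) = 0 := by
    apply inf_nsmul_aux
    rw [inf_comm]
    exact inf_nsmul_aux hab m
  have h3 : |g| - (z + w) ≤ (m • b) ⊓ (n • a) := by
    apply le_inf
    · rw [sub_le_iff_le_add']
      exact h2.trans (add_le_add_left (le_add_of_nonneg_left hz0) _)
    · rw [sub_le_iff_le_add']
      exact h1.trans (add_le_add_left (le_add_of_nonneg_right hw0) _)
  rw [h0, sub_nonpos] at h3
  exact hgp (hp (p.add_mem hz hw) (h3.trans (le_abs_self _)))

theorem lIdealGen_isLIdeal_aux {G : Type*} [Lattice G] [AddCommGroup G]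
    [CovariantClass G G (· + ·) (· ≤ ·)] (S : Set G) : IsLIdeal (lIdealGen S) := by
  intro a b hb hab
  simp only [lIdealGen, AddSubgroup.mem_sInf] at hb ⊢
  exact fun I hI => hI.1 (hb I hI) hab

/-- **Spectral characterisation of strong semisimplicity**: a unital ℓ-group is
strongly semisimple iff for every `h` and every prime `p` containing `h`, the
intersection of all maximal ℓ-ideals containing `h` is contained in `p`. -/
theorem strongly_semisimple_iff_spectral {G : Type*} [Lattice G] [AddCommGroup G]
    [CovariantClass G G (· + ·) (· ≤ ·)] (u : G) (hu : IsStrongUnit u) :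
    IsStronglySemisimple G ↔
      ∀ h : G, ∀ p : AddSubgroup G, IsPrimeLIdeal p → h ∈ p →
        ∀ g : G, (∀ m : AddSubgroup G, IsMaximalLIdeal m → h ∈ m → g ∈ m) → g ∈ p := by
  constructor
  · intro hs h p hp hhp g hg
    have h1 : g ∈ sInf {m : AddSubgroup G | IsMaximalLIdeal m ∧ h ∈ m} :=
      AddSubgroup.mem_sInf.2 fun m hm => hg m hm.1 hm.2
    rw [hs h] at h1
    exact AddSubgroup.mem_sInf.1 h1 p ⟨hp.1, by simpa using hhp⟩
  · intro H h
    apply le_antisymm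
    · intro g hg
      by_contra hcon
      obtain ⟨p, hp, hle, hgp⟩ := exists_prime_aux _ (lIdealGen_isLIdeal_aux {h}) g hcon
      refine hgp (H h p hp (hle ?_) g fun m hm hhm => AddSubgroup.mem_sInf.1 hg m ⟨hm, hhm⟩)
      exact AddSubgroup.mem_sInf.2 fun I hI => hI.2 rfl
    · exact le_sInf fun m hm => sInf_le ⟨hm.1.1, by simpa using hm.2⟩
end

section
/- Let G be a totally ordered abelian group that is Archimedean (for all g, h ∈ G with 0 < g ≤ h there exists m ∈ ℕ with ¬(m • g ≤ h)), and let u ∈ G be a strong order unit with u > 0. Then there exists a unique injective order-preserving additive map f : G → ℝ with f(u) = 1. (Hölder's theorem, unital form.) -/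
theorem holder_aux_le {G : Type*} [LinearOrder G] [AddCommGroup G] (u : G)
    (f g : G → ℝ) (hf : Monotone f) (hfa : ∀ a b : G, f (a + b) = f a + f b) (hfu : f u = 1)
    (hg : Monotone g) (hga : ∀ a b : G, g (a + b) = g a + g b) (hgu : g u = 1) (x : G) :
    g x ≤ f x := by
  by_contra! h
  obtain ⟨r, h1, h2⟩ := exists_rat_btwn h
  let F : G →+ ℝ := AddMonoidHom.mk' f hfa
  let K : G →+ ℝ := AddMonoidHom.mk' g hga
  have e1 : ∀ (n : ℤ) (y : G), f (n • y) = n * f y := fun n y => by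
    have := map_zsmul F n y
    rw [zsmul_eq_mul] at this
    exact this
  have e2 : ∀ (n : ℤ) (y : G), g (n • y) = n * g y := fun n y => by
    have := map_zsmul K n y
    rw [zsmul_eq_mul] at this
    exact this
  have hd : (0 : ℝ) < r.den := by exact_mod_cast r.den_pos
  have hr : (r : ℝ) * r.den = r.num := by exact_mod_cast Rat.mul_den_eq_num r
  rcases le_total ((r.den : ℤ) • x) (r.num • u) with h3 | h3
  · have := hg h3
    rw [e2, e2, hgu, Int.cast_natCast] at this
    nlinarith
  · have := hf h3
    rw [e1, e1, hfu, Int.cast_natCast] at this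
    nlinarith

/-- **Hölder's theorem (unital form)**: an Archimedean totally ordered abelian group
with a positive strong order unit `u` admits a unique injective order-preserving
additive map into `ℝ` sending `u` to `1`. -/
theorem holder_theorem {G : Type*} [LinearOrder G] [AddCommGroup G]
    [CovariantClass G G (· + ·) (· ≤ ·)]
    (harch : ∀ g h : G, 0 < g → g ≤ h → ∃ m : ℕ, ¬ (m • g ≤ h))
    (u : G) (hu : 0 < u) (hunit : ∀ g : G, ∃ n : ℕ, g ≤ n • u) :
    ∃! f : G → ℝ, Function.Injective f ∧ Monotone f ∧
      (∀ a b : G, f (a + b) = f a + f b) ∧ f u = 1 := by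
  have hadd : ∀ a b : G, a ≤ b → ∀ c, c + a ≤ c + b := fun a b h c =>
    CovariantClass.elim (μ := fun x y : G => x + y) (r := fun x y : G => x ≤ y) c h
  haveI : IsOrderedAddMonoid G :=
    { add_le_add_left := fun a b h c => by
        have := hadd a b h c
        rwa [add_comm c a, add_comm c b] at this }
  haveI : Archimedean G := ⟨fun x y hy => by
    rcases le_total y x with h | h
    · obtain ⟨m, hm⟩ := harch y x hy h
      exact ⟨m, (not_le.mp hm).le⟩
    · exact ⟨1, by simpa using h⟩⟩
  letI : One G := ⟨u⟩
  haveI : ZeroLEOneClass G := ⟨hu.le⟩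
  haveI : NeZero (1 : G) := ⟨hu.ne'⟩
  refine ⟨Archimedean.embedReal G, ⟨Archimedean.embedReal_injective G,
    (Archimedean.embedReal G).monotone', map_add _, Archimedean.embedReal_one⟩, ?_⟩
  rintro g ⟨-, hg, hga, hgu⟩
  funext x
  have hm : Monotone (Archimedean.embedReal G) := (Archimedean.embedReal G).monotone'
  exact le_antisymm
    (holder_aux_le u _ _ hm (map_add _) Archimedean.embedReal_one hg hga hgu x)
    (holder_aux_le u _ _ hg hga hgu hm (map_add _) Archimedean.embedReal_one x)
end

section
/- Let (G, u) be a unital ℓ-group and let g, h ∈ G be such that 0 < g and n • g ≤ h for every n ∈ ℕ with n ≥ 1. Then g belongs to every maximal ℓ-ideal of G, i.e. g ∈ Rad(G). -/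
/-- An infinitesimal element (one with `n • g ≤ h` for all `n ≥ 1`) of a unital
ℓ-group belongs to every maximal ℓ-ideal, i.e. to the radical. -/
theorem infinitesimal_mem_radical {G : Type*} [Lattice G] [AddCommGroup G]
    [CovariantClass G G (· + ·) (· ≤ ·)] (u : G) (hu : IsStrongUnit u)
    (g h : G) (hg : 0 < g) (hgh : ∀ n : ℕ, 1 ≤ n → n • g ≤ h) :
    ∀ m : AddSubgroup G, IsMaximalLIdeal m → g ∈ m := by
  intro m hm
  obtain ⟨hmI, hmt, hmax⟩ := hm
  by_contra hgm
  have tri : ∀ x y : G, |x + y| ≤ |x| + |y| := by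
    intro x y
    refine sup_le (add_le_add (le_sup_left) (le_sup_left)) ?_
    rw [neg_add]
    exact add_le_add le_sup_right le_sup_right
  have absnn : ∀ x : G, 0 ≤ |x| := fun x => abs_nonneg x
  have hg0 : |g| = g := abs_of_nonneg hg.le
  let I : AddSubgroup G :=
    { carrier := {x | ∃ a ∈ m, ∃ n : ℕ, |x| ≤ a + n • g}
      zero_mem' := ⟨0, m.zero_mem, 0, by simp⟩
      add_mem' := by
        rintro x y ⟨a, ha, n, hn⟩ ⟨b, hb, k, hk⟩
        refine ⟨a + b, m.add_mem ha hb, n + k, (tri x y).trans ?_⟩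
        rw [add_nsmul, add_add_add_comm]
        exact add_le_add hn hk
      neg_mem' := by
        rintro x ⟨a, ha, n, hn⟩
        exact ⟨a, ha, n, by rwa [abs_neg]⟩ }
  have hI : IsLIdeal I := by
    rintro x y ⟨a, ha, n, hn⟩ hxy
    exact ⟨a, ha, n, hxy.trans hn⟩
  have hmle : m ≤ I := by
    intro x hx
    exact ⟨|x|, hmI hx (abs_of_nonneg (absnn x)).le, 0, by simp⟩
  have hgI : g ∈ I := ⟨0, m.zero_mem, 1, by simp [hg0]⟩
  have htop : I = ⊤ := by
    by_contra hne
    exact hgm (hmax I hI hne hmle ▸ hgI)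
  have hh : h ∈ I := htop ▸ AddSubgroup.mem_top h
  obtain ⟨a, ha, k, hk⟩ := hh
  have h1 := ((hgh (k + 1) (by omega)).trans (le_abs_self h)).trans hk
  rw [succ_nsmul'] at h1
  have h2 : g ≤ a := le_of_add_le_add_right h1
  exact hgm (hmI ha (hg0.le.trans (h2.trans (le_abs_self a))))
end
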